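/- There is no integral simplex $\mathcal{P} \subset \mathbb{R}^2$ of dimension 2 whose $\delta$-vector is $(1,3,1)$, although there exists an integral (non-simplex) polygon with this $\delta$-vector. -/

import Mathlib

open Set Pointwise

/-- The number of lattice points in the `n`-th dilation of `P ⊆ ℝ^N`. -/
noncomputable def ehr {N : ℕ} (P : Set (Fin N → ℝ)) (n : ℕ) : ℕ :=
  Set.ncard {x : Fin N → ℤ | (fun i => (x i : ℝ)) ∈ (n : ℝ) • P}

/-- The `i`-th coefficient of `(1-λ)^(d+1) * (1 + ∑_{n ≥ 1} i(P,n) λ^n)`,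
i.e. the `i`-th entry of the δ-vector of a `d`-dimensional integral polytope. -/
noncomputable def deltaVec {N : ℕ} (P : Set (Fin N → ℝ)) (d i : ℕ) : ℤ :=
  ∑ j ∈ Finset.range (i + 1),
    (-1 : ℤ) ^ (i - j) * (Nat.choose (d + 1) (i - j) : ℤ) * (ehr P j : ℤ)

/-- `P ⊆ ℝ^N` is an integral polytope of dimension `d`. -/
def IsIntegralPolytope {N : ℕ} (P : Set (Fin N → ℝ)) (d : ℕ) : Prop :=
  ∃ V : Finset (Fin N → ℤ), V.Nonempty ∧
    P = convexHull ℝ ((fun v i => ((v i : ℝ))) '' (V : Set (Fin N → ℤ))) ∧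
    Module.finrank ℝ (vectorSpan ℝ P) = d

/-!
Let `v₀, …, v_d` be the vertices of an integral simplex and let `Λ ⊇ ℤ^(d+1)` be the group of
vectors `c` for which both `∑ cᵢ` and `∑ cᵢ vᵢ` are integral. The lattice points of the `n`-th
dilation are the `c ∈ Λ` with `c ≥ 0` and `∑ cᵢ = n`. Imposing `cᵢ < 1` for one index at a time
multiplies the generating function of their numbers by `1 - X`, so `δ_k` is the number of
`c ∈ Λ ∩ [0,1)^(d+1)` with `∑ cᵢ = k`, and `∑ δ_k` is the order of `Λ / ℤ^(d+1)`.

If this order is prime, each coordinate map `Λ / ℤ^(d+1) → ℝ / ℤ` is zero or injective, and an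
element of `[0,1)^(d+1)` with coordinate sum `d` (that is, `δ_d ≠ 0`) rules out zero. Hence
`c ↦ 1 - c` permutes the nonzero elements of `Λ ∩ [0,1)^(d+1)` and gives `δ_k = δ_{d+1-k}` for
`1 ≤ k ≤ d`. For a triangle with δ-vector `(1, 3, 1)`, of volume `5`, this would say `3 = 1`.
-/

section GeneratingFunction

open PowerSeries

lemma coeff_one_sub_X_pow (R : Type*) [CommRing R] (n k : ℕ) :
    coeff k ((1 - X : R⟦X⟧) ^ n) = (-1) ^ k * n.choose k := by
  have h : (1 - X : R⟦X⟧) ^ n =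
      rescale (-1) (((1 + Polynomial.X) ^ n : Polynomial R) : R⟦X⟧) := by
    simp [sub_eq_add_neg]
  rw [h, coeff_rescale, Polynomial.coeff_coe, Polynomial.coeff_one_add_X_pow]

lemma deltaVec_eq_coeff {N : ℕ} (P : Set (Fin N → ℝ)) (d i : ℕ) :
    deltaVec P d i =
      coeff i ((1 - X) ^ (d + 1) * mk fun n => (ehr P n : ℤ)) := by
  rw [mul_comm, coeff_mul, Finset.Nat.sum_antidiagonal_eq_sum_range_succ_mk]
  simp only [deltaVec, coeff_mk, coeff_one_sub_X_pow, mul_comm]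

end GeneratingFunction

section PartialBox

variable {ι : Type*} [Fintype ι]

/-- The elements of `L` in the nonnegative orthant with coordinate sum `n` whose coordinates
indexed by `s` are less than `1`. When `L` is the group of coefficient vectors of a lattice simplex,
these interpolate between the lattice points of the `n`-th dilation (`s = ∅`) and the half-open
fundamental parallelepiped at height `n` (`s = univ`). -/
def partialBox (L : AddSubgroup (ι → ℝ)) (s : Finset ι) (n : ℕ) : Set (ι → ℝ) :=
  {c | c ∈ L ∧ (∀ i, 0 ≤ c i) ∧ (∀ i ∈ s, c i < 1) ∧ ∑ i, c i = n}

variable {L : AddSubgroup (ι → ℝ)} {s t : Finset ι} {n : ℕ}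

lemma partialBox_anti (h : s ⊆ t) : partialBox L t n ⊆ partialBox L s n :=
  fun _ ⟨hL, h0, h1, hn⟩ => ⟨hL, h0, fun i hi => h1 i (h hi), hn⟩

variable [DecidableEq ι]

lemma partialBox_insert_zero (i : ι) : partialBox L (insert i s) 0 = partialBox L s 0 := by
  refine (partialBox_anti (Finset.subset_insert i s)).antisymm ?_
  rintro c ⟨hL, h0, -, hn⟩
  rw [Nat.cast_zero, Fintype.sum_eq_zero_iff_of_nonneg h0] at hn
  exact ⟨hL, h0, by simp [hn], by simp [hn]⟩

lemma partialBox_succ (he : ∀ i, Pi.single i 1 ∈ L) {i : ι} (hi : i ∉ s) :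
    partialBox L s (n + 1) =
      partialBox L (insert i s) (n + 1) ∪ (· + Pi.single i 1) '' partialBox L s n := by
  apply Subset.antisymm
  · rintro c ⟨hL, h0, h1, hn⟩
    obtain hci | hci := lt_or_ge (c i) 1
    · exact .inl ⟨hL, h0, by simpa [hci] using h1, hn⟩
    · refine .inr ⟨c - Pi.single i 1,
        ⟨L.sub_mem hL (he i), fun j => ?_, fun j hj => ?_, ?_⟩, sub_add_cancel _ _⟩
      · obtain rfl | hj := eq_or_ne j i
        · simpa using hci
        · simpa [hj] using h0 j
      · simpa [ne_of_mem_of_not_mem hj hi] using h1 j hj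
      · simp [hn]
  · rintro _ (hc | ⟨c, ⟨hL, h0, h1, hn⟩, rfl⟩)
    · exact partialBox_anti (Finset.subset_insert i s) hc
    · refine ⟨L.add_mem hL (he i), fun j => ?_, fun j hj => ?_, ?_⟩
      · exact add_nonneg (h0 j) ((Pi.single_nonneg (i := i) (α := fun _ => ℝ)).2 zero_le_one j)
      · simpa [ne_of_mem_of_not_mem hj hi] using h1 j hj
      · simp [Finset.sum_add_distrib, hn]

lemma ncard_partialBox_succ (he : ∀ i, Pi.single i 1 ∈ L) {i : ι} (hi : i ∉ s)
    (hfin : (partialBox L s (n + 1)).Finite) :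
    (partialBox L s (n + 1)).ncard =
      (partialBox L (insert i s) (n + 1)).ncard + (partialBox L s n).ncard := by
  have hdisj : Disjoint (partialBox L (insert i s) (n + 1))
      ((· + Pi.single i 1) '' partialBox L s n) := by
    refine Set.disjoint_left.2 ?_
    rintro _ ⟨-, -, h1, -⟩ ⟨c, ⟨-, h0, -⟩, rfl⟩
    have hlt : c i < 0 := by simpa using h1 i (Finset.mem_insert_self i s)
    exact hlt.not_ge (h0 i)
  rw [partialBox_succ he hi, finite_union] at hfin
  rw [partialBox_succ he hi, ncard_union_eq hdisj hfin.1 hfin.2,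
    ncard_image_of_injective _ (add_left_injective _)]

lemma one_sub_X_pow_mul_mk_ncard_partialBox (he : ∀ i, Pi.single i 1 ∈ L)
    (hfin : ∀ n, (partialBox L ∅ n).Finite) (s : Finset ι) :
    (1 - PowerSeries.X) ^ s.card * PowerSeries.mk (fun n => ((partialBox L ∅ n).ncard : ℤ)) =
      PowerSeries.mk fun n => ((partialBox L s n).ncard : ℤ) := by
  induction s using Finset.induction_on with
  | empty => simp
  | insert i s hi ih =>
    rw [Finset.card_insert_of_notMem hi, pow_succ', mul_assoc, ih]
    ext n
    cases n with
    | zero => simp [sub_mul, partialBox_insert_zero]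
    | succ n =>
      have h := ncard_partialBox_succ he hi
        ((hfin (n + 1)).subset (partialBox_anti (Finset.empty_subset s)))
      simp [sub_mul, PowerSeries.coeff_succ_X_mul, h]

end PartialBox

section HalfOpenBox

variable {ι : Type*}

/-- The elements of `L` in the half-open unit cube: when `L` contains all integer vectors, these
represent each class of `L` modulo integer vectors exactly once. -/
def halfOpenBox (L : AddSubgroup (ι → ℝ)) : Set (ι → ℝ) :=
  {c | c ∈ L ∧ ∀ i, c i ∈ Ico 0 1}

/-- Coordinatewise reduction modulo `1`. The quotient of a group `L` by the integer vectors is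
encoded as the image of `L` under this map. -/
def reduceModOne : (ι → ℝ) →+ (ι → UnitAddCircle) :=
  (QuotientAddGroup.mk' (AddSubgroup.zmultiples (1 : ℝ))).compLeft ι

variable {L : AddSubgroup (ι → ℝ)}

lemma reduceModOne_apply_eq_zero_iff {c : ι → ℝ} (hc : c ∈ halfOpenBox L) (i : ι) :
    reduceModOne c i = 0 ↔ c i = 0 :=
  AddCircle.coe_eq_zero_iff_of_mem_Ico (hc.2 i)

lemma injOn_reduceModOne : InjOn reduceModOne (halfOpenBox L) := by
  intro c hc d hd h
  ext i
  exact (AddCircle.coe_eq_coe_iff_of_mem_Ico (a := 0) (by simpa using hc.2 i)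
    (by simpa using hd.2 i)).1 (congrFun h i)

variable [Finite ι] [DecidableEq ι]

lemma fract_mem_of_single_mem (he : ∀ i, Pi.single i 1 ∈ L) {c : ι → ℝ} (hc : c ∈ L) :
    (fun i => Int.fract (c i)) ∈ L := by
  have := Fintype.ofFinite ι
  have h : (fun i => Int.fract (c i)) = c - ∑ i, ⌊c i⌋ • Pi.single i (1 : ℝ) := by
    ext j
    simp [Finset.sum_apply, Pi.single_apply]
  rw [h]
  exact L.sub_mem hc (L.sum_mem fun i _ => L.zsmul_mem (he i) _)

lemma bijOn_reduceModOne (he : ∀ i, Pi.single i 1 ∈ L) :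
    BijOn reduceModOne (halfOpenBox L) (L.map reduceModOne) := by
  refine ⟨fun c hc => ⟨c, hc.1, rfl⟩, injOn_reduceModOne, ?_⟩
  rintro _ ⟨c, hc, rfl⟩
  refine ⟨fun i => Int.fract (c i),
    ⟨fract_mem_of_single_mem he hc, fun i => ⟨Int.fract_nonneg _, Int.fract_lt_one _⟩⟩, ?_⟩
  ext i
  exact AddCircle.coe_fract (c i)

lemma eq_zero_of_apply_eq_zero_of_prime_ncard (he : ∀ i, Pi.single i 1 ∈ L)
    (hp : (halfOpenBox L).ncard.Prime) {a q : ι → ℝ} (ha : a ∈ halfOpenBox L)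
    (hq : q ∈ halfOpenBox L) {i : ι} (hai : a i = 0) (hqi : q i ≠ 0) : a = 0 := by
  let φ : L.map reduceModOne →+ UnitAddCircle :=
    (Pi.evalAddMonoidHom _ i).comp (L.map reduceModOne).subtype
  have hcard : Fact (Nat.card (L.map reduceModOne)).Prime :=
    ⟨by rwa [← SetLike.coe_sort_coe, Nat.card_coe_set_eq, ← (bijOn_reduceModOne he).ncard_eq]⟩
  have hbot : φ.ker = ⊥ := φ.ker.eq_bot_or_eq_top_of_prime_card.resolve_right fun htop =>
    have hker : (⟨reduceModOne q, q, hq.1, rfl⟩ : L.map reduceModOne) ∈ φ.ker :=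
      htop ▸ AddSubgroup.mem_top _
    hqi ((reduceModOne_apply_eq_zero_iff hq i).1 hker)
  have hker : (⟨reduceModOne a, a, ha.1, rfl⟩ : L.map reduceModOne) ∈ φ.ker :=
    (reduceModOne_apply_eq_zero_iff ha i).2 hai
  rw [hbot, AddSubgroup.mem_bot, Subtype.ext_iff] at hker
  ext j
  exact (reduceModOne_apply_eq_zero_iff ha j).1 (congrFun hker j)

end HalfOpenBox

section BoxSymmetry

variable {ι : Type*} [Fintype ι] {L : AddSubgroup (ι → ℝ)} {k l : ℕ} {c : ι → ℝ}

lemma mem_partialBox_univ :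
    c ∈ partialBox L Finset.univ k ↔ c ∈ halfOpenBox L ∧ ∑ i, c i = k := by
  simp only [partialBox, halfOpenBox, mem_ofPred_eq, mem_Ico, Finset.mem_univ, true_imp_iff,
    forall_and, and_assoc]

lemma halfOpenBox_eq_biUnion [Nonempty ι] (hL : ∀ c ∈ L, ∃ n : ℤ, ∑ i, c i = n) :
    halfOpenBox L = ⋃ k ∈ Finset.range (Fintype.card ι), partialBox L Finset.univ k := by
  ext c
  simp only [mem_iUnion, mem_partialBox_univ, Finset.mem_range, exists_prop]
  refine ⟨fun hc => ?_, fun ⟨_, _, hc, _⟩ => hc⟩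
  obtain ⟨n, hn⟩ := hL c hc.1
  have hlower : 0 ≤ ∑ i, c i := Finset.sum_nonneg fun i _ => (hc.2 i).1
  have hupper : ∑ i, c i < Fintype.card ι := by
    simpa using Finset.sum_lt_sum_of_nonempty Finset.univ_nonempty fun i _ => (hc.2 i).2
  rw [hn] at hlower hupper
  lift n to ℕ using mod_cast hlower
  exact ⟨n, mod_cast hupper, hc, mod_cast hn⟩

lemma ncard_halfOpenBox [Nonempty ι] (hL : ∀ c ∈ L, ∃ n : ℤ, ∑ i, c i = n)
    (hfin : ∀ k, (partialBox L Finset.univ k).Finite) :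
    (halfOpenBox L).ncard =
      ∑ k ∈ Finset.range (Fintype.card ι), (partialBox L Finset.univ k).ncard := by
  have hdisj : Pairwise fun k l => Disjoint (partialBox L Finset.univ k)
      (partialBox L Finset.univ l) := fun k l hkl => Set.disjoint_left.2 fun c hk hl =>
    hkl (Nat.cast_injective (hk.2.2.2.symm.trans hl.2.2.2))
  rw [halfOpenBox_eq_biUnion hL, ← finsum_mem_coe_finset]
  exact (Finset.finite_toSet _).ncard_biUnion (fun k _ => hfin k) (hdisj.set_pairwise _)

lemma pos_of_mem_partialBox_univ [Nontrivial ι] (hk : k + 1 = Fintype.card ι)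
    (hc : c ∈ partialBox L Finset.univ k) (i : ι) : 0 < c i := by
  classical
  have hlt : ∑ j ∈ Finset.univ.erase i, c j < k := by
    have hcard : (Finset.univ.erase i).card = k := by simp [← hk]
    have hne : (Finset.univ.erase i).Nonempty := Finset.univ_nontrivial.erase_nonempty
    simpa [hcard] using
      Finset.sum_lt_sum_of_nonempty hne fun j _ => hc.2.2.1 j (Finset.mem_univ j)
  have hsum := Finset.add_sum_erase Finset.univ c (Finset.mem_univ i)
  linarith [hc.2.2.2]

variable [DecidableEq ι]

lemma one_sub_mem_partialBox_univ (he : ∀ i, Pi.single i 1 ∈ L)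
    (hkl : k + l = Fintype.card ι) (hc : c ∈ partialBox L Finset.univ k)
    (hpos : ∀ i, c i ≠ 0) : 1 - c ∈ partialBox L Finset.univ l := by
  have hone : (1 : ι → ℝ) ∈ L := by
    rw [← Finset.univ_sum_single (1 : ι → ℝ)]
    exact L.sum_mem fun i _ => he i
  obtain ⟨hL, h0, h1, hk⟩ := hc
  refine ⟨L.sub_mem hone hL, fun i => ?_, fun i _ => ?_, ?_⟩
  · exact sub_nonneg.2 (h1 i (Finset.mem_univ i)).le
  · exact sub_lt_self _ ((h0 i).lt_of_ne' (hpos i))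
  · simp [hk, ← hkl]

lemma ncard_partialBox_univ_eq_of_prime (he : ∀ i, Pi.single i 1 ∈ L)
    (hfin : ∀ k, (partialBox L Finset.univ k).Finite) (hp : (halfOpenBox L).ncard.Prime)
    {q : ι → ℝ} (hq : q ∈ halfOpenBox L) (hpos : ∀ i, q i ≠ 0) (hk : k ≠ 0) (hl : l ≠ 0)
    (hkl : k + l = Fintype.card ι) :
    (partialBox L Finset.univ k).ncard = (partialBox L Finset.univ l).ncard := by
  have hle : ∀ {k l : ℕ}, k ≠ 0 → k + l = Fintype.card ι →
      (partialBox L Finset.univ k).ncard ≤ (partialBox L Finset.univ l).ncard := by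
    intro k l hk hkl
    refine ncard_le_ncard_of_injOn (1 - ·) (fun c hc => ?_) sub_right_injective.injOn (hfin l)
    obtain ⟨hcbox, hsum⟩ := mem_partialBox_univ.1 hc
    refine one_sub_mem_partialBox_univ he hkl hc fun i hci => hk ?_
    have hzero := eq_zero_of_apply_eq_zero_of_prime_ncard he hp hcbox hq hci (hpos i)
    simpa [hzero, eq_comm] using hsum
  exact (hle hk hkl).antisymm (hle hl (by rwa [add_comm]))

end BoxSymmetry

section LatticeSimplex

lemma convexHull_range_eq_image_stdSimplex {ι E : Type*} [Fintype ι] [AddCommGroup E]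
    [Module ℝ E] (p : ι → E) :
    convexHull ℝ (range p) = Fintype.linearCombination ℝ p '' stdSimplex ℝ ι := by
  classical
  rw [← convexHull_rangle_single_eq_stdSimplex, LinearMap.image_convexHull, ← range_comp]
  congr 2
  ext i
  simp

lemma mem_smul_convexHull_range_iff {ι E : Type*} [Fintype ι] [Nonempty ι] [AddCommGroup E]
    [Module ℝ E] {p : ι → E} {r : ℝ} (hr : 0 ≤ r) {y : E} :
    y ∈ r • convexHull ℝ (range p) ↔
      ∃ c : ι → ℝ, (∀ i, 0 ≤ c i) ∧ ∑ i, c i = r ∧ Fintype.linearCombination ℝ p c = y := by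
  constructor
  · rw [convexHull_range_eq_image_stdSimplex, ← image_smul_set]
    rintro ⟨_, ⟨w, ⟨hw0, hw1⟩, rfl⟩, rfl⟩
    exact ⟨r • w, fun i => mul_nonneg hr (hw0 i), by simp [← Finset.mul_sum, hw1], rfl⟩
  · rintro ⟨c, hc0, rfl, rfl⟩
    obtain hzero | hpos := hr.eq_or_lt
    · have hc : c = 0 := (Fintype.sum_eq_zero_iff_of_nonneg hc0).1 hzero.symm
      rw [← hzero, zero_smul_set (range_nonempty p).convexHull, hc, map_zero]
      exact mem_singleton _
    · rw [mem_smul_set_iff_inv_smul_mem₀ hpos.ne', convexHull_range_eq_image_stdSimplex,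
        ← map_smul]
      exact ⟨_, ⟨fun i => mul_nonneg (inv_nonneg.2 hr) (hc0 i),
        by simp [← Finset.mul_sum, hpos.ne']⟩, rfl⟩

lemma finite_intCast_preimage_of_isBounded {N : ℕ} {B : Set (Fin N → ℝ)}
    (hB : Bornology.IsBounded B) : {x : Fin N → ℤ | (fun i => (x i : ℝ)) ∈ B}.Finite := by
  have hiso : Isometry fun (x : Fin N → ℤ) i => (x i : ℝ) :=
    Isometry.piMap _ fun _ => Real.isometry_intCast
  exact (Metric.isCompact_of_isClosed_isBounded (isClosed_discrete _)
    (hiso.antilipschitz.isBounded_preimage hB)).finite_of_discrete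

variable {ι : Type*} [Fintype ι] {N : ℕ}

/-- The convex hull in `ℝ^N` of integer points `v p`; it is an integral simplex when the `v p` are
affinely independent, which is not part of the definition. -/
def latticeSimplex (v : ι → Fin N → ℤ) : Set (Fin N → ℝ) :=
  convexHull ℝ (range fun p i => (v p i : ℝ))

/-- The coefficient vectors with integral coordinate sum whose combination of the points `v p` is
integral: the lattice of the cone over the simplex, in coordinates along its generators. -/
def coeffLattice (v : ι → Fin N → ℤ) : AddSubgroup (ι → ℝ) where
  carrier := {c | (∃ n : ℤ, ∑ i, c i = n) ∧ ∃ x : Fin N → ℤ,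
    Fintype.linearCombination ℝ (fun p i => (v p i : ℝ)) c = fun i => (x i : ℝ)}
  zero_mem' := ⟨⟨0, by simp⟩, 0, by ext; simp⟩
  add_mem' := by
    rintro c d ⟨⟨n, hn⟩, x, hx⟩ ⟨⟨m, hm⟩, y, hy⟩
    exact ⟨⟨n + m, by simp [Finset.sum_add_distrib, hn, hm]⟩, x + y,
      by ext; simp [map_add, hx, hy]⟩
  neg_mem' := by
    rintro c ⟨⟨n, hn⟩, x, hx⟩
    exact ⟨⟨-n, by simp [hn]⟩, -x, by ext; simp [map_neg, hx]⟩

lemma single_mem_coeffLattice [DecidableEq ι] (v : ι → Fin N → ℤ) (i : ι) :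
    Pi.single i 1 ∈ coeffLattice v :=
  ⟨⟨1, by simp⟩, v i, by simp⟩

lemma bijOn_linearCombination_partialBox [Nonempty ι] {v : ι → Fin N → ℤ}
    (hv : AffineIndependent ℝ (fun p i => (v p i : ℝ))) (n : ℕ) :
    BijOn (Fintype.linearCombination ℝ (fun p i => (v p i : ℝ)))
      (partialBox (coeffLattice v) ∅ n)
      ((fun (x : Fin N → ℤ) i => (x i : ℝ)) ''
        {x | (fun i => (x i : ℝ)) ∈ (n : ℝ) • latticeSimplex v}) := by
  refine ⟨?_, ?_, ?_⟩
  · rintro c ⟨⟨-, x, hx⟩, h0, -, hn⟩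
    exact ⟨x, (mem_smul_convexHull_range_iff n.cast_nonneg).2 ⟨c, h0, hn, hx⟩, hx.symm⟩
  · intro c hc d hd h
    have hsub := affineIndependent_iff.1 hv Finset.univ (c - d)
      (by simp [hc.2.2.2, hd.2.2.2])
      (by simpa [sub_smul, Fintype.linearCombination_apply, sub_eq_zero] using h)
    ext i
    exact sub_eq_zero.1 (hsub i (Finset.mem_univ i))
  · rintro _ ⟨x, hx, rfl⟩
    obtain ⟨c, h0, hn, hc⟩ := (mem_smul_convexHull_range_iff n.cast_nonneg).1 hx
    exact ⟨c, ⟨⟨⟨n, mod_cast hn⟩, x, hc⟩, h0, by simp, hn⟩, hc⟩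

lemma finite_partialBox_coeffLattice [Nonempty ι] {v : ι → Fin N → ℤ}
    (hv : AffineIndependent ℝ (fun p i => (v p i : ℝ))) (s : Finset ι) (n : ℕ) :
    (partialBox (coeffLattice v) s n).Finite := by
  have hbdd : Bornology.IsBounded ((n : ℝ) • latticeSimplex v) :=
    (isBounded_convexHull.2 (finite_range _).isBounded).smul₀ _
  exact ((bijOn_linearCombination_partialBox hv n).finite_iff_finite.2
    ((finite_intCast_preimage_of_isBounded hbdd).image _)).subset
      (partialBox_anti (Finset.empty_subset s))

lemma ncard_partialBox_coeffLattice_empty [Nonempty ι] {v : ι → Fin N → ℤ}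
    (hv : AffineIndependent ℝ (fun p i => (v p i : ℝ))) (n : ℕ) :
    (partialBox (coeffLattice v) ∅ n).ncard = ehr (latticeSimplex v) n := by
  have hinj : Function.Injective fun (x : Fin N → ℤ) i => (x i : ℝ) :=
    Function.Injective.piMap fun _ => Int.cast_injective
  rw [(bijOn_linearCombination_partialBox hv n).ncard_eq, ncard_image_of_injective _ hinj, ehr]

variable {d : ℕ} {v : Fin (d + 1) → Fin N → ℤ}

theorem deltaVec_latticeSimplex
    (hv : AffineIndependent ℝ (fun p i => (v p i : ℝ))) (k : ℕ) :
    deltaVec (latticeSimplex v) d k = (partialBox (coeffLattice v) Finset.univ k).ncard := by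
  have h := one_sub_X_pow_mul_mk_ncard_partialBox (single_mem_coeffLattice v)
    (finite_partialBox_coeffLattice hv ∅) Finset.univ
  simp only [Finset.card_fin, ncard_partialBox_coeffLattice_empty hv] at h
  rw [deltaVec_eq_coeff, h, PowerSeries.coeff_mk]

theorem deltaVec_latticeSimplex_symm_of_prime
    (hv : AffineIndependent ℝ (fun p i => (v p i : ℝ)))
    (hp : Prime (∑ k ∈ Finset.range (d + 1), deltaVec (latticeSimplex v) d k))
    (hd : deltaVec (latticeSimplex v) d d ≠ 0)
    {k l : ℕ} (hk : k ≠ 0) (hl : l ≠ 0) (hkl : k + l = d + 1) :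
    deltaVec (latticeSimplex v) d k = deltaVec (latticeSimplex v) d l := by
  simp only [deltaVec_latticeSimplex hv, Nat.cast_ne_zero, Nat.cast_inj] at hp hd ⊢
  have hfin := finite_partialBox_coeffLattice hv Finset.univ
  have hsum := ncard_halfOpenBox (L := coeffLattice v) (fun c hc => hc.1) hfin
  rw [Fintype.card_fin] at hsum
  rw [← Nat.cast_sum, ← hsum, ← Nat.prime_iff_prime_int] at hp
  obtain ⟨q, hq⟩ := nonempty_of_ncard_ne_zero hd
  have : Nontrivial (Fin (d + 1)) := Fin.nontrivial_iff_two_le.2 (by omega)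
  exact ncard_partialBox_univ_eq_of_prime (single_mem_coeffLattice v) hfin hp
    (mem_partialBox_univ.1 hq).1
    (fun i => (pos_of_mem_partialBox_univ (Fintype.card_fin _).symm hq i).ne') hk hl
    (by rw [hkl, Fintype.card_fin])

end LatticeSimplex

section LatticePolytope

variable {N : ℕ} {V : Finset (Fin N → ℤ)}

/-- The integral polytope in `ℝ^N` spanned by a finite set of integer points. -/
def latticeHull (V : Finset (Fin N → ℤ)) : Set (Fin N → ℝ) :=
  convexHull ℝ ((fun v i => ((v i : ℝ))) '' (V : Set (Fin N → ℤ)))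

lemma intCast_mem_smul_latticeHull_of_mem_nsmul (hV : V.Nonempty) {n : ℕ} {x : Fin N → ℤ}
    (hx : x ∈ n • V) : (fun i => (x i : ℝ)) ∈ (n : ℝ) • latticeHull V := by
  have hconv : Convex ℝ (latticeHull V) := convex_convexHull ℝ _
  have hne : (latticeHull V).Nonempty := ((Finset.coe_nonempty.2 hV).image _).convexHull
  induction n generalizing x with
  | zero =>
    rw [zero_nsmul, Finset.mem_zero] at hx
    rw [Nat.cast_zero, zero_smul_set hne, hx]
    simp only [Pi.zero_apply, Int.cast_zero]
    rfl
  | succ n ih =>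
    rw [succ_nsmul] at hx
    obtain ⟨y, hy, v, hv, rfl⟩ := Finset.mem_add.1 hx
    rw [Nat.cast_succ, hconv.add_smul n.cast_nonneg zero_le_one, one_smul]
    exact ⟨_, ih hy, _, subset_convexHull ℝ _ ⟨v, hv, rfl⟩, by ext; simp⟩

lemma dotProduct_le_of_intCast_mem_smul_latticeHull {a : Fin N → ℤ} {b : ℤ}
    (hV : ∀ v ∈ V, a ⬝ᵥ v ≤ b) {n : ℕ} {x : Fin N → ℤ}
    (hx : (fun i => (x i : ℝ)) ∈ (n : ℝ) • latticeHull V) : a ⬝ᵥ x ≤ n * b := by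
  let φ : (Fin N → ℝ) →ₗ[ℝ] ℝ := Fintype.linearCombination ℝ fun i => (a i : ℝ)
  have hφ : ∀ v : Fin N → ℤ, φ (fun i => (v i : ℝ)) = (a ⬝ᵥ v : ℤ) := fun v => by
    simp [φ, Fintype.linearCombination_apply, dotProduct, mul_comm]
  have hhull : latticeHull V ⊆ {y | φ y ≤ b} := by
    refine convexHull_min ?_ (convex_halfSpace_le φ.isLinear b)
    rintro _ ⟨v, hv, rfl⟩
    simpa only [mem_ofPred_eq, hφ, Int.cast_le] using hV v hv
  obtain ⟨y, hy, hyx⟩ := hx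
  have hle : φ (fun i => (x i : ℝ)) ≤ n * b := by
    rw [← hyx, map_smul]
    exact mul_le_mul_of_nonneg_left (hhull hy) n.cast_nonneg
  rw [hφ] at hle
  exact_mod_cast hle

lemma ehr_latticeHull_eq_card_nsmul (hV : V.Nonempty) {n : ℕ}
    (h : ∀ x : Fin N → ℤ, (fun i => (x i : ℝ)) ∈ (n : ℝ) • latticeHull V → x ∈ n • V) :
    ehr (latticeHull V) n = (n • V).card := by
  rw [ehr, ← ncard_coe_finset]
  congr 1
  ext x
  exact ⟨h x, intCast_mem_smul_latticeHull_of_mem_nsmul hV⟩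

lemma vectorSpan_eq_top_of_zero_mem_of_single_mem {P : Set (Fin N → ℝ)} (h0 : 0 ∈ P)
    (h1 : ∀ i, Pi.single i 1 ∈ P) : vectorSpan ℝ P = ⊤ := by
  rw [eq_top_iff, ← (Pi.basisFun ℝ (Fin N)).span_eq, Submodule.span_le]
  rintro _ ⟨i, rfl⟩
  simpa using vsub_mem_vectorSpan ℝ (h1 i) h0

end LatticePolytope

section Quadrilateral

/-- All lattice points of the quadrilateral with vertices `(-1, 1)`, `(1, 1)`, `(1, 0)`, `(0, -1)`,
of normalized volume `5`; its only interior one is the origin. Points that are not vertices are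
included so that sumsets of this set exhaust the lattice points of dilations. -/
def quadrilateralPoints : Finset (Fin 2 → ℤ) :=
  {![0, 0], ![-1, 1], ![0, 1], ![1, 1], ![1, 0], ![0, -1]}

lemma mem_nsmul_quadrilateralPoints {n : ℕ} (hn : n ≤ 2) {x : Fin 2 → ℤ}
    (hx : (fun i => (x i : ℝ)) ∈ (n : ℝ) • latticeHull quadrilateralPoints) :
    x ∈ n • quadrilateralPoints := by
  have htop := dotProduct_le_of_intCast_mem_smul_latticeHull (a := ![0, 1]) (b := 1)
    (by decide) hx
  have hright := dotProduct_le_of_intCast_mem_smul_latticeHull (a := ![1, 0]) (b := 1)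
    (by decide) hx
  have hlower := dotProduct_le_of_intCast_mem_smul_latticeHull (a := ![1, -1]) (b := 1)
    (by decide) hx
  have hleft := dotProduct_le_of_intCast_mem_smul_latticeHull (a := ![-2, -1]) (b := 1)
    (by decide) hx
  simp only [Matrix.vec2_dotProduct, Matrix.cons_val_zero, Matrix.cons_val_one]
    at htop hright hlower hleft
  obtain ⟨a, b, rfl⟩ : ∃ a b, x = ![a, b] := ⟨x 0, x 1, by ext i; fin_cases i <;> rfl⟩
  simp only [Matrix.cons_val_zero, Matrix.cons_val_one] at htop hright hlower hleft
  clear hx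
  obtain ⟨ha, ha'⟩ : -n ≤ a ∧ a ≤ n := by omega
  obtain ⟨hb, hb'⟩ : -n ≤ b ∧ b ≤ n := by omega
  interval_cases n <;> interval_cases a <;> interval_cases b <;> first | omega | decide

lemma deltaVec_latticeHull_quadrilateralPoints {m : ℕ} (hm : m ≤ 2) :
    deltaVec (latticeHull quadrilateralPoints) 2 m =
      if m = 0 then 1 else if m = 1 then 3 else 1 := by
  have hehr : ∀ n ≤ 2, ehr (latticeHull quadrilateralPoints) n =
      (n • quadrilateralPoints).card := fun n hn =>
    ehr_latticeHull_eq_card_nsmul (by decide) fun _ => mem_nsmul_quadrilateralPoints hn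
  have h0 : ehr (latticeHull quadrilateralPoints) 0 = 1 := (hehr 0 (by norm_num)).trans (by decide)
  have h1 : ehr (latticeHull quadrilateralPoints) 1 = 6 := (hehr 1 (by norm_num)).trans (by decide)
  have h2 : ehr (latticeHull quadrilateralPoints) 2 = 16 := (hehr 2 le_rfl).trans (by decide)
  interval_cases m <;> simp [deltaVec, Finset.sum_range_succ, h0, h1, h2]

lemma isIntegralPolytope_latticeHull_quadrilateralPoints :
    IsIntegralPolytope (latticeHull quadrilateralPoints) 2 := by
  refine ⟨quadrilateralPoints, by decide, rfl, ?_⟩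
  have hmem : ∀ v ∈ quadrilateralPoints, (fun i => (v i : ℝ)) ∈ latticeHull quadrilateralPoints :=
    fun v hv => subset_convexHull ℝ _ ⟨v, hv, rfl⟩
  rw [vectorSpan_eq_top_of_zero_mem_of_single_mem, finrank_top, Module.finrank_fin_fun]
  · convert hmem 0 (by decide) using 1
    ext; simp
  · have hsingle : ∀ i, Pi.single i 1 ∈ quadrilateralPoints := by decide
    intro i
    convert hmem (Pi.single i 1) (hsingle i) using 1
    ext j
    simp [Pi.single_apply]

end Quadrilateral

theorem stmt19_general (N : ℕ) :
    (¬ ∃ v : Fin 3 → Fin N → ℤ,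
        AffineIndependent ℝ (fun p i => (v p i : ℝ)) ∧
        ∀ m ≤ 2, deltaVec (convexHull ℝ (Set.range fun p i => ((v p i : ℝ)))) 2 m =
          (if m = 0 then 1 else if m = 1 then 3 else 1)) ∧
    (∃ P : Set (Fin 2 → ℝ), IsIntegralPolytope P 2 ∧
        ∀ m ≤ 2, deltaVec P 2 m =
          (if m = 0 then 1 else if m = 1 then 3 else 1)) := by
  refine ⟨?_, latticeHull quadrilateralPoints,
    isIntegralPolytope_latticeHull_quadrilateralPoints,
    fun _ => deltaVec_latticeHull_quadrilateralPoints⟩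
  rintro ⟨v, hv, h⟩
  have h0 : deltaVec (latticeSimplex v) 2 0 = 1 := h 0 (by norm_num)
  have h1 : deltaVec (latticeSimplex v) 2 1 = 3 := h 1 (by norm_num)
  have h2 : deltaVec (latticeSimplex v) 2 2 = 1 := h 2 le_rfl
  have hprime : Prime (∑ k ∈ Finset.range 3, deltaVec (latticeSimplex v) 2 k) := by
    norm_num [Finset.sum_range_succ, h0, h1, h2, Int.prime_iff_natAbs_prime]
  have hsymm : deltaVec (latticeSimplex v) 2 1 = deltaVec (latticeSimplex v) 2 2 :=
    deltaVec_latticeSimplex_symm_of_prime hv hprime (by norm_num [h2]) one_ne_zero two_ne_zero rfl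
  norm_num [h1, h2] at hsymm

theorem stmt19 :
    -- no integral triangle in ℝ² has δ-vector (1,3,1)
    (¬ ∃ v : Fin 3 → Fin 2 → ℤ,
        AffineIndependent ℝ (fun p i => (v p i : ℝ)) ∧
        ∀ m ≤ 2, deltaVec (convexHull ℝ (Set.range fun p i => ((v p i : ℝ)))) 2 m =
          (if m = 0 then 1 else if m = 1 then 3 else 1)) ∧
    -- but some 2-dimensional integral polytope does
    (∃ P : Set (Fin 2 → ℝ), IsIntegralPolytope P 2 ∧
        ∀ m ≤ 2, deltaVec P 2 m =
          (if m = 0 then 1 else if m = 1 then 3 else 1)) :=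
  stmt19_general 2
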